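/- arXiv:2104.01274 — 12 statements merged into one kernel-verified Lean document; each statement's English description precedes it below -/
import Mathlib

section
/- Let (c_1,…,c_n) be a quiddity cycle of length n ≥ 3 with sign ε, and let 2 ≤ i ≤ n−1 with c_i = 1. Then the sequence (c_1,…,c_{i−2},c_{i−1}−1,c_{i+1}−1,c_{i+2},…,c_n) of length n−1 is a quiddity cycle with the same sign ε. -/
/-- The continuant matrix `M(c)` for an integer `c`. -/
def M (c : ℤ) : Matrix (Fin 2) (Fin 2) ℤ := !![c, -1; 1, 0]

/-- `M(c₁,…,cₙ) := M(c₁)·…·M(cₙ)`. -/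
def Mseq (l : List ℤ) : Matrix (Fin 2) (Fin 2) ℤ := (l.map M).prod

/-- Surgery operation (a): if a quiddity cycle has an inner entry equal to `1`
(the sequence is `u ++ [p, 1, q] ++ v`, so the entry has index `i` with `2 ≤ i ≤ n−1`),
then removing it and decreasing both neighbours by one yields a quiddity cycle of
length `n−1` with the same sign. -/
theorem surgery_one (u v : List ℤ) (p q : ℤ) (ε : ℤ) (hε : ε = 1 ∨ ε = -1)
    (h : Mseq (u ++ [p, 1, q] ++ v) = ε • (1 : Matrix (Fin 2) (Fin 2) ℤ)) :
    Mseq (u ++ [p - 1, q - 1] ++ v) = ε • (1 : Matrix (Fin 2) (Fin 2) ℤ) := by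
  have key : M p * (M 1 * M q) = M (p - 1) * M (q - 1) := by
    ext i j
    fin_cases i <;> fin_cases j <;> simp [M, Matrix.mul_apply, Fin.sum_univ_two] <;> ring
  rw [← h]
  simp only [Mseq, List.map_append, List.prod_append, List.map_cons, List.map_nil,
    List.prod_cons, List.prod_nil, mul_one, key]
end

section
/- Let (c_1,…,c_n) be a quiddity cycle of length n ≥ 3 with sign ε, and let 2 ≤ i ≤ n−1 with c_i = −1. Then the sequence (c_1,…,c_{i−2},c_{i−1}+1,c_{i+1}+1,c_{i+2},…,c_n) of length n−1 is a quiddity cycle with sign −ε. -/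
/-- Surgery operation (b): if a quiddity cycle has an inner entry equal to `-1`
(the sequence is `u ++ [p, -1, q] ++ v`, so the entry has index `i` with `2 ≤ i ≤ n−1`),
then removing it and increasing both neighbours by one yields a quiddity cycle of
length `n−1` with the opposite sign. -/
theorem surgery_neg_one (u v : List ℤ) (p q : ℤ) (ε : ℤ) (hε : ε = 1 ∨ ε = -1)
    (h : Mseq (u ++ [p, -1, q] ++ v) = ε • (1 : Matrix (Fin 2) (Fin 2) ℤ)) :
    Mseq (u ++ [p + 1, q + 1] ++ v) = (-ε) • (1 : Matrix (Fin 2) (Fin 2) ℤ) := by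
  have key : M p * (M (-1) * M q) = -(M (p + 1) * M (q + 1)) := by
    ext i j
    fin_cases i <;> fin_cases j <;> simp [M, Matrix.mul_apply, Fin.sum_univ_two] <;> ring
  have e : Mseq (u ++ [p, -1, q] ++ v) = -Mseq (u ++ [p + 1, q + 1] ++ v) := by
    have h1 : Mseq (u ++ [p, -1, q] ++ v)
        = (u.map M).prod * (M p * (M (-1) * M q)) * (v.map M).prod := by
      simp [Mseq, mul_assoc]
    have h2 : Mseq (u ++ [p + 1, q + 1] ++ v)
        = (u.map M).prod * (M (p + 1) * M (q + 1)) * (v.map M).prod := by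
      simp [Mseq, mul_assoc]
    rw [h1, h2, key, mul_neg, neg_mul]
  rw [neg_smul, ← h, e, neg_neg]
end

section
/- Let (c_1,…,c_n) be a quiddity cycle of length n ≥ 3 with sign ε, and let 2 ≤ i ≤ n−1 with c_i = 0. Then the sequence (c_1,…,c_{i−2},c_{i−1}+c_{i+1},c_{i+2},…,c_n) of length n−2 is a quiddity cycle with sign −ε. -/
/-- Surgery operation (c): if a quiddity cycle has an inner entry equal to `0`
(the sequence is `u ++ [p, 0, q] ++ v`, so the entry has index `i` with `2 ≤ i ≤ n−1`),
then removing it and merging the two neighbours into their sum yields a quiddity cycle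
of length `n−2` with the opposite sign. -/
theorem surgery_zero (u v : List ℤ) (p q : ℤ) (ε : ℤ) (hε : ε = 1 ∨ ε = -1)
    (h : Mseq (u ++ [p, 0, q] ++ v) = ε • (1 : Matrix (Fin 2) (Fin 2) ℤ)) :
    Mseq (u ++ [p + q] ++ v) = (-ε) • (1 : Matrix (Fin 2) (Fin 2) ℤ) := by
  have key : M p * (M 0 * M q) = -M (p + q) := by
    ext i j
    fin_cases i <;> fin_cases j <;> simp [M, Matrix.mul_apply, Fin.sum_univ_two] <;> ring
  simp only [Mseq, List.map_append, List.prod_append, List.map_cons, List.map_nil,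
    List.prod_cons, List.prod_nil, mul_one] at h ⊢
  rw [key, mul_neg, neg_mul] at h
  rw [neg_smul, ← h, neg_neg]
end

section
/- Let a, c be coprime integers with c > 0. Then there exist a natural number k ≥ 1 and unique integers q_1,…,q_k and r_1,…,r_{k−1} satisfying q_i ≥ 2 for all i ∈ {2,…,k}, 0 < r_i < r_{i−1} for all i ∈ {1,…,k−1} (where r_0 := c), and the recurrences a = q_1·c − r_1, c = q_2·r_1 − r_2, r_{i−2} = q_i·r_{i−1} − r_i for 3 ≤ i ≤ k−1, and r_{k−2} = q_k·r_{k−1}; moreover a/c = [[q_1,…,q_k]]. -/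
/-- The negative continued fraction `[[q₁,…,q_k]]` of a list of integers,
defined by `[[q_k]] = q_k` and `[[q_i,…,q_k]] = q_i − 1/[[q_{i+1},…,q_k]]`. -/
def ncf : List ℤ → ℚ
  | [] => 0
  | [q] => (q : ℚ)
  | q :: l => (q : ℚ) - 1 / ncf l

/-- The system of equations of the negative euclidean algorithm for `a` and `c`:
writing `q = [q₁,…,q_k]` and `r = [r₁,…,r_{k−1}]`, and setting `r₀ := c` and `r_k := 0`,
we require `k ≥ 1`, `qᵢ ≥ 2` for `2 ≤ i ≤ k`, `0 < rᵢ < r_{i−1}` for `1 ≤ i ≤ k−1`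
(together with `r_{k-1} > 0`, i.e. the chain `c > r₁ > … > r_{k−1} > 0`), and the
recurrences `a = q₁·c − r₁`, `c = q₂·r₁ − r₂`, `r_{i−2} = qᵢ·r_{i−1} − rᵢ`,
`r_{k−2} = q_k·r_{k−1} − 0`. -/
def NegEuclid (a c : ℤ) (q r : List ℤ) : Prop :=
  1 ≤ q.length ∧ r.length + 1 = q.length ∧
  (∀ i, 1 ≤ i → i < q.length → 2 ≤ q.getD i 0) ∧
  List.Chain' (· > ·) (c :: (r ++ [0])) ∧
  (∀ i < q.length,
    (a :: c :: (r ++ [0])).getD i 0 =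
      q.getD i 0 * (a :: c :: (r ++ [0])).getD (i + 1) 0
        - (a :: c :: (r ++ [0])).getD (i + 2) 0)

theorem ne_chain_pos (r : List ℤ) : ∀ c : ℤ, List.Chain' (· > ·) (c :: (r ++ [0])) → 0 < c := by
  induction r with
  | nil =>
    intro c h
    exact (List.isChain_cons_cons.1 h).1
  | cons x t ih =>
    intro c h
    simp only [List.cons_append] at h
    have h2 := List.isChain_cons_cons.1 h
    have := ih x h2.2
    have := h2.1
    omega

theorem ne_nil_iff (a c : ℤ) (q : List ℤ) :
    NegEuclid a c q [] ↔ ∃ q0, q = [q0] ∧ 0 < c ∧ a = q0 * c := by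
  constructor
  · rintro ⟨h1, h2, h3, h4, h5⟩
    match q, h2 with
    | [q0], _ =>
      refine ⟨q0, rfl, ne_chain_pos _ _ h4, ?_⟩
      simpa using h5 0 (by simp)
  · rintro ⟨q0, rfl, hc, ha⟩
    refine ⟨by simp, by simp, ?_, ?_, ?_⟩
    · intro i h1 h2
      simp at h2
      omega
    · exact List.isChain_cons_cons.2 ⟨hc, List.isChain_singleton _⟩
    · intro i hi
      have : i = 0 := by simpa using hi
      subst this
      simpa using ha

theorem ne_cons_iff (a c x : ℤ) (q t : List ℤ) :
    NegEuclid a c q (x :: t) ↔ ∃ q0 q', q = q0 :: q' ∧ x < c ∧ a = q0 * c - x ∧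
      NegEuclid c x q' t := by
  constructor
  · rintro ⟨h1, h2, h3, h4, h5⟩
    match q, h2 with
    | q0 :: q', h2 =>
      simp only [List.cons_append] at h4
      have h6 := List.isChain_cons_cons.1 h4
      refine ⟨q0, q', rfl, h6.1, by simpa using h5 0 (by simp), ?_, ?_, ?_, h6.2, ?_⟩
      · simp at h2
        omega
      · simpa using h2
      · intro i hi hi'
        simpa using h3 (i + 1) (by omega) (by simpa using hi')
      · intro i hi
        simpa using h5 (i + 1) (by simpa using hi)
  · rintro ⟨q0, q', rfl, hx, ha, h1, h2, h3, h4, h5⟩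
    have hx0 := ne_chain_pos _ _ h4
    refine ⟨by simp, by simpa using h2, ?_, ?_, ?_⟩
    · intro i hi hi'
      obtain ⟨j, rfl⟩ : ∃ j, i = j + 1 := ⟨i - 1, by omega⟩
      rcases Nat.eq_zero_or_pos j with rfl | hj
      · have h6 := h5 0 (by omega)
        have h7 : 0 ≤ (t ++ [0]).getD 0 0 := by
          cases t with
          | nil => simp
          | cons y s =>
            simp only [List.cons_append] at h4
            have := ne_chain_pos _ _ (List.isChain_cons_cons.1 h4).2
            simpa using this.le
        simp only [List.getD_cons_zero, List.getD_cons_succ, zero_add] at h6 ⊢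
        have h8 : c = q'.getD 0 0 * x - (t ++ [0]).getD 0 0 := h6
        by_contra hlt
        have : q'.getD 0 0 ≤ 1 := by omega
        nlinarith
      · simpa using h3 j hj (by simpa using hi')
    · exact List.isChain_cons_cons.2 ⟨hx, h4⟩
    · intro i hi
      rcases i with _ | j
      · simpa using ha
      · simpa using h5 j (by simpa using hi)

theorem ne_main (n : ℕ) : ∀ a c : ℤ, 0 < c → c.toNat ≤ n →
    ∃ q r : List ℤ, NegEuclid a c q r ∧ ncf q = (a : ℚ) / (c : ℚ) ∧
      ∀ q' r' : List ℤ, NegEuclid a c q' r' → q' = q ∧ r' = r := by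
  induction n with
  | zero =>
    intro a c hc h
    omega
  | succ n ih =>
    intro a c hc hn
    have hcq : (c : ℚ) ≠ 0 := by exact_mod_cast hc.ne'
    have e1 := Int.mul_ediv_add_emod (-a) c
    have e2 := Int.emod_nonneg (-a) hc.ne'
    have e3 := Int.emod_lt_of_pos (-a) hc
    have key : ∀ q0 x : ℤ, 0 ≤ x → x < c → a = q0 * c - x →
        q0 = -((-a) / c) ∧ x = (-a) % c := by
      intro q0 x h0 h1 h2
      have := (Int.ediv_emod_unique (a := -a) (r := x) (q := -q0) hc).2
        ⟨by rw [h2]; ring, h0, h1⟩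
      omega
    have ha : a = -((-a) / c) * c - (-a) % c := by linarith
    generalize -((-a) / c) = p at *
    generalize (-a) % c = x at *
    rcases e2.eq_or_lt with hx | hx
    · subst hx
      refine ⟨[p], [], (ne_nil_iff _ _ _).2 ⟨p, rfl, hc, by linarith⟩, ?_, ?_⟩
      · rw [eq_div_iff hcq, ncf]
        exact_mod_cast (by linarith : p * c = a)
      · intro q' r' h
        cases r' with
        | nil =>
          obtain ⟨q0, rfl, -, h'⟩ := (ne_nil_iff _ _ _).1 h
          rw [(key q0 0 le_rfl hc (by linarith)).1]
          simp
        | cons y t =>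
          obtain ⟨q0, q1, rfl, h1, h2, h3⟩ := (ne_cons_iff _ _ _ _ _).1 h
          have hy := ne_chain_pos _ _ h3.2.2.2.1
          have := (key q0 y hy.le h1 h2).2
          omega
    · obtain ⟨q, r, h1, h2, h3⟩ := ih c x hx (by omega)
      refine ⟨p :: q, x :: r, (ne_cons_iff _ _ _ _ _).2 ⟨p, q, rfl, e3, ha, h1⟩, ?_, ?_⟩
      · have hq : q ≠ [] := by
          rintro rfl
          simpa using h1.1
        have hxq : (x : ℚ) ≠ 0 := by exact_mod_cast hx.ne'
        rw [ncf, h2]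
        · have : (a : ℚ) = p * c - x := by exact_mod_cast ha
          rw [this]
          field_simp
        · exact hq
      · intro q' r' h
        cases r' with
        | nil =>
          obtain ⟨q0, rfl, -, h'⟩ := (ne_nil_iff _ _ _).1 h
          have := (key q0 0 le_rfl hc (by linarith)).2
          omega
        | cons y t =>
          obtain ⟨q0, q1, rfl, g1, g2, g3⟩ := (ne_cons_iff _ _ _ _ _).1 h
          have hy := ne_chain_pos _ _ g3.2.2.2.1
          obtain ⟨rfl, rfl⟩ := key q0 y hy.le g1 g2
          obtain ⟨rfl, rfl⟩ := h3 _ _ g3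
          simp

/-- Negative euclidean algorithm: for coprime integers `a` and `c > 0` there exist
unique integers `q₁,…,q_k` and `r₁,…,r_{k−1}` (with `k ≥ 1`) satisfying the system of
equations above, and moreover `a/c = [[q₁,…,q_k]]`. -/
theorem negEuclid_exists_unique (a c : ℤ) (hc : 0 < c) (h : IsCoprime a c) :
    ∃ q r : List ℤ, NegEuclid a c q r ∧ ncf q = (a : ℚ) / (c : ℚ) ∧
      ∀ q' r' : List ℤ, NegEuclid a c q' r' → q' = q ∧ r' = r := by
  exact ne_main c.toNat a c hc le_rfl
end

section
/- Every rational number q can be written in exactly one way as a negative continued fraction q = [[d_1,…,d_k]] with d_1 ∈ ℤ and d_i ≥ 2 for all i ∈ {2,…,k}. -/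
theorem ncf_cons_cons (a b : ℤ) (l : List ℤ) :
    ncf (a :: b :: l) = (a : ℚ) - 1 / ncf (b :: l) := rfl

theorem ncf_bounds (l : List ℤ) : ∀ a : ℤ, (∀ x ∈ l, 2 ≤ x) →
    (a : ℚ) - 1 < ncf (a :: l) ∧ ncf (a :: l) ≤ a ∧ (l ≠ [] → ncf (a :: l) < a) := by
  induction l with
  | nil => intro a _; simp [ncf]
  | cons b l ih =>
    intro a h
    obtain ⟨h1, -, -⟩ := ih b (fun x hx => h x (by simp [hx]))
    have hb : (2 : ℚ) ≤ b := by exact_mod_cast h b (by simp)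
    have h2 : 1 < ncf (b :: l) := by linarith
    have h3 : 0 < 1 / ncf (b :: l) := by positivity
    have h4 : 1 / ncf (b :: l) < 1 := by
      rw [div_lt_one (by linarith)]; exact h2
    rw [ncf_cons_cons]
    exact ⟨by linarith, by linarith, fun _ => by linarith⟩

theorem ncf_inj (l : List ℤ) : ∀ (a a' : ℤ) (l' : List ℤ), (∀ x ∈ l, 2 ≤ x) →
    (∀ x ∈ l', 2 ≤ x) → ncf (a :: l) = ncf (a' :: l') → a = a' ∧ l = l' := by
  induction l with
  | nil =>
    intro a a' l' h h' e
    obtain ⟨h1, h2, h3⟩ := ncf_bounds [] a h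
    obtain ⟨k1, k2, k3⟩ := ncf_bounds l' a' h'
    have e1 : a < a' + 1 := by
      have : (a : ℚ) < a' + 1 := by linarith
      exact_mod_cast this
    have e2 : a' < a + 1 := by
      have : (a' : ℚ) < a + 1 := by linarith
      exact_mod_cast this
    obtain rfl : a = a' := by omega
    refine ⟨rfl, ?_⟩
    by_contra hne
    have := k3 (fun h => hne h.symm)
    rw [← e] at this
    simp [ncf] at this
  | cons b l ih =>
    intro a a' l' h h' e
    obtain ⟨h1, h2, h3⟩ := ncf_bounds (b :: l) a h
    obtain ⟨k1, k2, k3⟩ := ncf_bounds l' a' h'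
    have e1 : a < a' + 1 := by
      have : (a : ℚ) < a' + 1 := by linarith
      exact_mod_cast this
    have e2 : a' < a + 1 := by
      have : (a' : ℚ) < a + 1 := by linarith
      exact_mod_cast this
    obtain rfl : a = a' := by omega
    refine ⟨rfl, ?_⟩
    cases l' with
    | nil =>
      have := h3 (by simp)
      rw [e] at this
      simp [ncf] at this
    | cons b' l' =>
      rw [ncf_cons_cons, ncf_cons_cons] at e
      have e3 : ncf (b :: l) = ncf (b' :: l') := by
        simpa using e
      obtain ⟨r1, r2⟩ := ih b b' l' (fun x hx => h x (by simp [hx]))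
        (fun x hx => h' x (by simp [hx])) e3
      rw [r1, r2]

theorem ncf_exists (n : ℕ) : ∀ a : ℤ, 0 < n →
    ∃ (c : ℤ) (l : List ℤ), (∀ x ∈ l, 2 ≤ x) ∧ ncf (c :: l) = (a : ℚ) / n := by
  induction n using Nat.strong_induction_on with
  | _ n ih =>
    intro a hn
    have hnz : (0 : ℤ) < n := by exact_mod_cast hn
    have hnq : (0 : ℚ) < n := by exact_mod_cast hn
    obtain ⟨m, hm⟩ := Int.eq_ofNat_of_zero_le (Int.emod_nonneg (-a) hnz.ne')
    have hlt := Int.emod_lt_of_pos (-a) hnz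
    have hdiv := Int.emod_add_mul_ediv (-a) n
    rw [hm] at hlt hdiv
    generalize (-a) / (n : ℤ) = k at hdiv
    have hq : (m : ℚ) + n * k = -a := by exact_mod_cast hdiv
    rcases Nat.eq_zero_or_pos m with h0 | h0
    · refine ⟨-k, [], by simp, ?_⟩
      subst h0
      simp only [ncf]
      rw [eq_div_iff hnq.ne']
      push_cast at hq ⊢
      linarith
    · have hmn : m < n := by exact_mod_cast hlt
      have hmq : (0 : ℚ) < m := by exact_mod_cast h0
      have hmnq : (m : ℚ) < n := by exact_mod_cast hmn
      obtain ⟨c, l, hl, e⟩ := ih m hmn n h0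
      refine ⟨-k, c :: l, ?_, ?_⟩
      · have hb := (ncf_bounds l c hl).2.1
        have h1 : (1 : ℚ) < ncf (c :: l) := by
          rw [e, lt_div_iff₀ hmq]; push_cast; linarith
        have h2 : (1 : ℚ) < c := by linarith
        have h3 : 1 < c := by exact_mod_cast h2
        intro x hx
        rcases List.mem_cons.1 hx with rfl | hx
        · omega
        · exact hl x hx
      · rw [ncf_cons_cons, e]
        push_cast
        rw [one_div_div, eq_div_iff hnq.ne', sub_mul, div_mul_cancel₀ _ hnq.ne']
        linarith

theorem getD_cond_iff (a : ℤ) (l : List ℤ) :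
    (∀ i, 1 ≤ i → i < (a :: l).length → 2 ≤ (a :: l).getD i 0) ↔ ∀ x ∈ l, 2 ≤ x := by
  constructor
  · intro h x hx
    obtain ⟨i, hi, rfl⟩ := List.mem_iff_getElem.1 hx
    have := h (i + 1) (by omega) (by simpa using hi)
    simpa [List.getD, hi] using this
  · intro h i h1 h2
    obtain ⟨j, rfl⟩ : ∃ j, i = j + 1 := ⟨i - 1, by omega⟩
    have hj : j < l.length := by simpa using h2
    have := h l[j] (List.getElem_mem hj)
    simpa [List.getD, hj] using this

/-- Every rational number `q` can be written in exactly one way as a negative continued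
fraction `q = [[d₁,…,d_k]]` with `d₁ ∈ ℤ` and `dᵢ ≥ 2` for all `i ∈ {2,…,k}`. -/
theorem ncf_existsUnique (q : ℚ) :
    ∃! d : List ℤ, d ≠ [] ∧ (∀ i, 1 ≤ i → i < d.length → 2 ≤ d.getD i 0) ∧ ncf d = q := by
  obtain ⟨c, l, hl, e⟩ := ncf_exists q.den q.num q.den_pos
  rw [Rat.num_div_den] at e
  refine ⟨c :: l, ⟨by simp, (getD_cond_iff c l).2 hl, e⟩, ?_⟩
  rintro d ⟨hd, h, e'⟩
  cases d with
  | nil => exact absurd rfl hd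
  | cons c' l' =>
    obtain ⟨r1, r2⟩ := ncf_inj l' c' c l ((getD_cond_iff c' l').1 h) hl (e'.trans e.symm)
    rw [r1, r2]
end

section
/- Let A be a matrix in SL(2,ℤ) with entries a, b (top row) and c, d (bottom row), such that |a| > 1, c ≠ 0, and a and c have the same sign (a·c > 0). Then ⌈b/a⌉ = ⌈d/c⌉, where ⌈·⌉ denotes the ceiling of the rational quotient. -/
theorem ceil_eq_aux (a b c d : ℤ) (hdet : a * d - b * c = 1)
    (ha : 1 < a) (hc : 0 < c) :
    ⌈(b : ℚ) / (a : ℚ)⌉ = ⌈(d : ℚ) / (c : ℚ)⌉ := by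
  have ha' : (0 : ℚ) < a := by exact_mod_cast (by omega : 0 < a)
  have hc' : (0 : ℚ) < c := by exact_mod_cast hc
  obtain ⟨n, hn⟩ : ∃ n, ⌈(b : ℚ) / (a : ℚ)⌉ = n := ⟨_, rfl⟩
  rw [hn]
  symm
  rw [Int.ceil_eq_iff] at hn ⊢
  rw [lt_div_iff₀ ha', div_le_iff₀ ha'] at hn
  rw [lt_div_iff₀ hc', div_le_iff₀ hc']
  obtain ⟨h1, h2⟩ := hn
  have h1 : (n - 1) * a < b := by exact_mod_cast h1
  have h2 : b ≤ n * a := by exact_mod_cast h2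
  have h3 : (n - 1) * c < d := by
    by_contra! h
    nlinarith [mul_le_mul_of_nonneg_left h (by omega : 0 ≤ a), mul_lt_mul_of_pos_right h1 hc]
  have h4 : d ≤ n * c := by
    by_contra! h
    have h' : n * c + 1 ≤ d := h
    nlinarith [mul_le_mul_of_nonneg_left h' (by omega : 0 ≤ a), mul_le_mul_of_nonneg_right h2 hc.le]
  exact ⟨by exact_mod_cast h3, by exact_mod_cast h4⟩

/-- Let `A = !![a, b; c, d]` be an integer matrix of determinant `1` with `|a| > 1`,
`c ≠ 0` and `a·c > 0`. Then `⌈b/a⌉ = ⌈d/c⌉`. -/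
theorem ceil_eq_of_sl2 (a b c d : ℤ) (hdet : a * d - b * c = 1)
    (ha : 1 < |a|) (hc : c ≠ 0) (hsign : 0 < a * c) :
    ⌈(b : ℚ) / (a : ℚ)⌉ = ⌈(d : ℚ) / (c : ℚ)⌉ := by
  rcases mul_pos_iff.mp hsign with ⟨h1, h2⟩ | ⟨h1, h2⟩
  · rw [abs_of_pos h1] at ha
    exact ceil_eq_aux a b c d hdet ha h2
  · rw [abs_of_neg h1] at ha
    have := ceil_eq_aux (-a) (-b) (-c) (-d) (by linarith) ha (by omega)
    push_cast at this
    rwa [neg_div_neg_eq, neg_div_neg_eq] at this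
end

section
/- Let A ∈ SL(2,ℤ) have entries a, b (top row) and c, d (bottom row) with c ≠ 0, let q_1,…,q_k be integers with q_i ≥ 2 for i ∈ {2,…,k} and a/c = [[q_1,…,q_k]], and let m = ⌈d/c⌉. Then A = ε·M(q_1,…,q_k,m,0) for some ε ∈ {1,−1}. -/
theorem Mseq_form (l : List ℤ) (hl : ∀ t ∈ l, 2 ≤ t) :
    ∃ x y z w : ℤ, Mseq l = !![x, -y; z, -w] ∧ 0 ≤ z ∧ z < x ∧ 0 ≤ y ∧ w ≤ y ∧ y < x ∧
      z - w ≤ x - y ∧ y * z - x * w = 1 ∧ ncf l = (x : ℚ) / z := by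
  induction l with
  | nil =>
    refine ⟨1, 0, 0, -1, ?_, by norm_num, by norm_num, by norm_num, by norm_num, by norm_num,
      by norm_num, by norm_num, by simp [ncf]⟩
    ext i j
    fin_cases i <;> fin_cases j <;> simp [Mseq]
  | cons q l ih =>
    obtain ⟨x, y, z, w, h, h1, h2, h3, h4, h5, h6, h7, h8⟩ :=
      ih (fun t ht => hl t (List.mem_cons_of_mem _ ht))
    have hq : 2 ≤ q := hl q List.mem_cons_self
    have hM : Mseq (q :: l) = M q * Mseq l := by simp [Mseq]
    refine ⟨q * x - z, q * y - w, x, y, ?_, by linarith, by nlinarith, by nlinarith,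
      by nlinarith, by nlinarith, by nlinarith, by linarith, ?_⟩
    · rw [hM, h, M]
      ext i j
      fin_cases i <;> fin_cases j <;> simp [Matrix.mul_apply, Fin.sum_univ_two] <;> ring
    · have hx : (x : ℚ) ≠ 0 := by
        have : x ≠ 0 := by omega
        exact_mod_cast this
      have : ncf (q :: l) = (q : ℚ) - 1 / ncf l := by
        cases l <;> simp [ncf]
      rw [this, h8]
      push_cast
      rw [one_div_div]
      field_simp

/-- Let `A = !![a, b; c, d] ∈ SL(2,ℤ)` with `c ≠ 0`, let `q₁,…,q_k` be integers with
`qᵢ ≥ 2` for `i ∈ {2,…,k}` and `a/c = [[q₁,…,q_k]]`, and let `m = ⌈d/c⌉`.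
Then `A = ε·M(q₁,…,q_k,m,0)` for some `ε ∈ {1,−1}`. -/
theorem presentation_exists (a b c d : ℤ) (hdet : a * d - b * c = 1) (hc : c ≠ 0)
    (q : List ℤ) (hq : q ≠ [])
    (hq2 : ∀ i, 1 ≤ i → i < q.length → 2 ≤ q.getD i 0)
    (hncf : ncf q = (a : ℚ) / (c : ℚ))
    (m : ℤ) (hm : m = ⌈(d : ℚ) / (c : ℚ)⌉) :
    ∃ ε : ℤ, (ε = 1 ∨ ε = -1) ∧ !![a, b; c, d] = ε • Mseq (q ++ [m, 0]) := by
  obtain _ | ⟨h, l⟩ := q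
  · exact absurd rfl hq
  have hl : ∀ t ∈ l, 2 ≤ t := by
    intro t ht
    obtain ⟨n, hn, rfl⟩ := List.getElem_of_mem ht
    have := hq2 (n + 1) (by omega) (by simpa using hn)
    simpa [List.getD, hn] using this
  obtain ⟨x, y, z, w, hM, h1, h2, h3, h4, h5, h6, h7, h8⟩ := Mseq_form l hl
  have hx0 : 0 < x := by omega
  have hxq : (x : ℚ) ≠ 0 := by exact_mod_cast hx0.ne'
  have hcq : (c : ℚ) ≠ 0 := by exact_mod_cast hc
  have hcf : ncf (h :: l) = (h : ℚ) - 1 / ncf l := by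
    cases l <;> simp [ncf]
  have hax : a * x = c * (h * x - z) := by
    rw [hcf, h8, one_div_div] at hncf
    field_simp at hncf
    have : (a : ℚ) * x = c * (h * x - z) := by linarith
    exact_mod_cast this
  have hcx : c ∣ x := ⟨d * (h * x - z) - b * x, by linear_combination (-x) * hdet + d * hax⟩
  have hxc : x ∣ c := ⟨-(a * y) + c * (h * y - w), by
    linear_combination (-c) * h7 + y * hax⟩
  have hN : ∀ ε : ℤ, ε • Mseq ((h :: l) ++ [m, 0]) =
      !![-ε * (h * x - z), ε * (-m * (h * x - z) + (h * y - w)); -ε * x, ε * (-m * x + y)] := by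
    intro ε
    have : Mseq ((h :: l) ++ [m, 0]) = M h * Mseq l * (M m * M 0) := by
      simp [Mseq, Matrix.mul_assoc]
    rw [this, hM]
    ext i j
    fin_cases i <;> fin_cases j <;>
      simp [M, -mul_eq_mul_left_iff] <;> ring
  have hex : ∃ ε : ℤ, (ε = 1 ∨ ε = -1) ∧ c = -ε * x := by
    rcases Int.natAbs_eq_natAbs_iff.mp (Int.natAbs_eq_of_dvd_dvd hcx hxc) with e | e
    · exact ⟨-1, Or.inr rfl, by linarith⟩
    · exact ⟨1, Or.inl rfl, by linarith⟩
  obtain ⟨ε, hε, hce⟩ := hex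
  have hee : ε * ε = 1 := by rcases hε with rfl | rfl <;> norm_num
  have ha : a = -ε * (h * x - z) := by
    apply mul_right_cancel₀ hx0.ne'
    rw [hax, hce]; ring
  obtain ⟨k, hk⟩ : ∃ k, d = ε * (-k * x + y) := by
    have h9 : (h * x - z) * (-ε * d + y) = x * ((h * y - w) - ε * b) := by
      rw [ha, hce] at hdet
      linear_combination hdet - h7
    have h10 : -ε * d + y = x * ((h * y - w) * (-ε * d + y) - y * ((h * y - w) - ε * b)) := by
      linear_combination (-y) * h9 - (-ε * d + y) * h7
    refine ⟨(h * y - w) * (-ε * d + y) - y * ((h * y - w) - ε * b), ?_⟩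
    linear_combination (-ε) * h10 - d * hee
  have hmk : m = k := by
    rw [hm, Int.ceil_eq_iff]
    have heq : (d : ℚ) / c = k - y / x := by
      have hεq : (ε : ℚ) ≠ 0 := by rcases hε with rfl | rfl <;> norm_num
      rw [hk, hce]; push_cast; field_simp; ring
    have hxp : (0 : ℚ) < x := by exact_mod_cast hx0
    have hy0 : (0 : ℚ) ≤ y / x := div_nonneg (by exact_mod_cast h3) hxp.le
    have hy1 : (y : ℚ) / x < 1 := (div_lt_one hxp).2 (by exact_mod_cast h5)
    rw [heq]
    constructor <;> linarith
  refine ⟨ε, hε, ?_⟩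
  have hb : b = ε * (-m * (h * x - z) + (h * y - w)) := by
    apply mul_right_cancel₀ hx0.ne'
    rw [hmk]
    rw [ha, hk, hce] at hdet
    linear_combination ε * hdet - ε * h7 + ((h * x - z) * (-k * x + y) * ε - b * x) * hee
  rw [hN, ← ha, ← hb, ← hce, hmk, ← hk]
end

section
/- Let A ∈ SL(2,ℤ) have entries a, b (top row) and c, d (bottom row), and suppose A = ε·M(q_1,…,q_k,m,0) for some ε ∈ {1,−1} and integers q_1,…,q_k, m with q_i ≥ 2 for all i ∈ {2,…,k}. Then c ≠ 0, a/c = [[q_1,…,q_k]], and m = ⌈d/c⌉; in particular, such a presentation of A ending in 0 with all entries except the first and the last two at least 2 is unique. -/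
theorem ncf_cons (x : ℤ) (l : List ℤ) : ncf (x :: l) = (x : ℚ) - 1 / ncf l := by
  cases l with
  | nil => simp [ncf]
  | cons y l => rfl

theorem Mseq_cons (x : ℤ) (l : List ℤ) : Mseq (x :: l) = M x * Mseq l := by
  simp [Mseq]

theorem Mseq_cons_entries (x : ℤ) (l : List ℤ) :
    Mseq (x :: l) 0 0 = x * Mseq l 0 0 - Mseq l 1 0 ∧
    Mseq (x :: l) 0 1 = x * Mseq l 0 1 - Mseq l 1 1 ∧
    Mseq (x :: l) 1 0 = Mseq l 0 0 ∧
    Mseq (x :: l) 1 1 = Mseq l 0 1 := by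
  rw [Mseq_cons]
  simp [M, Matrix.mul_apply, Fin.sum_univ_two, sub_eq_add_neg]

theorem Mseq_inv (l : List ℤ) (h : ∀ y ∈ l, 2 ≤ y) :
    Mseq l 1 0 < Mseq l 0 0 ∧ 0 ≤ Mseq l 1 0 ∧ Mseq l 0 1 ≤ 0 ∧
    Mseq l 0 1 ≤ Mseq l 1 1 ∧ Mseq l 1 0 + Mseq l 1 1 ≤ Mseq l 0 0 + Mseq l 0 1 ∧
    1 ≤ Mseq l 0 0 + Mseq l 0 1 := by
  induction l with
  | nil => simp [Mseq]
  | cons x l ih =>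
    obtain ⟨h1, h2, h3, h4, h5, h6⟩ := ih (fun y hy => h y (by simp [hy]))
    have hx : 2 ≤ x := h x (by simp)
    obtain ⟨e1, e2, e3, e4⟩ := Mseq_cons_entries x l
    rw [e1, e2, e3, e4]
    refine ⟨?_, ?_, ?_, ?_, ?_, ?_⟩ <;> nlinarith

theorem ncf_eq (l : List ℤ) (h : ∀ y ∈ l, 2 ≤ y) (x : ℤ) :
    ncf (x :: l) = (Mseq (x :: l) 0 0 : ℚ) / (Mseq (x :: l) 1 0 : ℚ) := by
  induction l generalizing x with
  | nil => simp [ncf, Mseq, M]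
  | cons y l ih =>
    rw [ncf_cons, ih (fun y hy => h y (by simp [hy]))]
    obtain ⟨e1, -, e3, -⟩ := Mseq_cons_entries x (y :: l)
    have hi := Mseq_inv (y :: l) h
    have hp : (Mseq (y :: l) 0 0 : ℚ) ≠ 0 := by
      have : Mseq (y :: l) 0 0 ≠ 0 := by omega
      exact_mod_cast this
    rw [e1, e3]
    push_cast
    rw [one_div_div]
    field_simp

theorem ncf_inv (l : List ℤ) (h : ∀ y ∈ l, 2 ≤ y) : l = [] ∨ 1 < ncf l := by
  induction l with
  | nil => simp
  | cons x l ih =>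
    right
    have hx : (2 : ℚ) ≤ x := by exact_mod_cast h x (by simp)
    rw [ncf_cons]
    rcases ih (fun y hy => h y (by simp [hy])) with rfl | h1
    · simp [ncf]; linarith
    · have : 1 / ncf l < 1 := by rw [div_lt_one (by linarith)]; exact h1
      linarith

theorem ncf_inv' (l : List ℤ) (h : ∀ y ∈ l, 2 ≤ y) : 0 ≤ 1 / ncf l ∧ 1 / ncf l < 1 := by
  rcases ncf_inv l h with rfl | h1
  · simp [ncf]
  · exact ⟨by positivity, by rw [div_lt_one (by linarith)]; exact h1⟩

theorem ncf_inj_s11 (l : List ℤ) (h : ∀ y ∈ l, 2 ≤ y) (l' : List ℤ) (h' : ∀ y ∈ l', 2 ≤ y)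
    (x x' : ℤ) (e : ncf (x :: l) = ncf (x' :: l')) : x = x' ∧ l = l' := by
  induction l generalizing x x' l' with
  | nil =>
    rw [ncf_cons x, ncf_cons x'] at e
    obtain ⟨a1, a2⟩ := ncf_inv' [] h
    obtain ⟨b1, b2⟩ := ncf_inv' l' h'
    have hx : x = x' := by
      have u1 : (x : ℚ) < x' + 1 := by linarith
      have u2 : (x' : ℚ) < x + 1 := by linarith
      norm_cast at u1 u2
      omega
    refine ⟨hx, ?_⟩
    subst hx
    rcases ncf_inv l' h' with rfl | h1
    · rfl
    · exfalso
      have : 0 < 1 / ncf l' := by positivity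
      simp only [ncf, div_zero] at e
      linarith
  | cons y l ih =>
    rw [ncf_cons x, ncf_cons x'] at e
    obtain ⟨a1, a2⟩ := ncf_inv' _ h
    obtain ⟨b1, b2⟩ := ncf_inv' l' h'
    have hx : x = x' := by
      have u1 : (x : ℚ) < x' + 1 := by linarith
      have u2 : (x' : ℚ) < x + 1 := by linarith
      norm_cast at u1 u2
      omega
    refine ⟨hx, ?_⟩
    subst hx
    have e' : ncf (y :: l) = ncf l' := by simpa using e
    cases l' with
    | nil =>
      rcases ncf_inv _ h with h0 | h1
      · simp at h0
      · rw [e'] at h1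
        norm_num [ncf] at h1
    | cons y' l' =>
      obtain ⟨r1, r2⟩ := ih (fun y hy => h y (by simp [hy])) l'
        (fun y hy => h' y (by simp [hy])) y y' e'
      rw [r1, r2]

theorem pres_main (a b c d : ℤ) (x : ℤ) (l : List ℤ)
    (h : ∀ y ∈ l, 2 ≤ y) (m ε : ℤ) (hε : ε = 1 ∨ ε = -1)
    (hA : !![a, b; c, d] = ε • Mseq ((x :: l) ++ [m, 0])) :
    c ≠ 0 ∧ ncf (x :: l) = (a : ℚ) / (c : ℚ) ∧ m = ⌈(d : ℚ) / (c : ℚ)⌉ := by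
  have hM : Mseq ((x :: l) ++ [m, 0]) = Mseq (x :: l) * !![-1, -m; 0, -1] := by
    simp [Mseq, M, mul_assoc]
  rw [hM] at hA
  have ha := congrFun (congrFun hA 0) 0
  have hc := congrFun (congrFun hA 1) 0
  have hd := congrFun (congrFun hA 1) 1
  rw [ncf_eq l h x]
  obtain ⟨-, -, e3, e4⟩ := Mseq_cons_entries x l
  obtain ⟨i1, i2, i3, i4, i5, i6⟩ := Mseq_inv l h
  rw [← e3] at i1 i5 i6
  rw [← e4] at i3 i5 i6
  simp [Matrix.mul_apply, Fin.sum_univ_two] at ha hc hd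
  generalize Mseq (x :: l) 0 0 = p at *
  generalize Mseq (x :: l) 1 0 = s at *
  generalize Mseq (x :: l) 1 1 = t at *
  have hs : 0 < s := by omega
  have hsq : (0 : ℚ) < s := by exact_mod_cast hs
  have htq : (t : ℚ) ≤ 0 := by exact_mod_cast i3
  have hstq : (1 : ℚ) ≤ s + t := by exact_mod_cast i6
  have hdc : (d : ℚ) / c = m + t / s := by
    rcases hε with rfl | rfl <;> rw [hc, hd] <;> push_cast <;> field_simp <;> ring
  refine ⟨?_, ?_, ?_⟩
  · rcases hε with rfl | rfl <;> omega
  · rcases hε with rfl | rfl <;> rw [ha, hc] <;> push_cast <;> field_simp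
  · symm
    rw [hdc, Int.ceil_eq_iff]
    have h1 : (t : ℚ) / s ≤ 0 := div_nonpos_of_nonpos_of_nonneg htq hsq.le
    have h2 : -1 < (t : ℚ) / s := by rw [lt_div_iff₀ hsq]; linarith
    constructor <;> linarith

theorem tail_ge (x : ℤ) (l : List ℤ)
    (hq2 : ∀ i, 1 ≤ i → i < (x :: l).length → 2 ≤ (x :: l).getD i 0) :
    ∀ y ∈ l, 2 ≤ y := by
  intro y hy
  obtain ⟨i, hi, rfl⟩ := List.mem_iff_getElem.1 hy
  have := hq2 (i + 1) (by omega) (by simpa using hi)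
  simpa [hi] using this


/-- Let `A = !![a, b; c, d] ∈ SL(2,ℤ)` and suppose `A = ε·M(q₁,…,q_k,m,0)` for some
`ε ∈ {1,−1}` and integers `q₁,…,q_k, m` with `qᵢ ≥ 2` for all `i ∈ {2,…,k}`.
Then `c ≠ 0`, `a/c = [[q₁,…,q_k]]` and `m = ⌈d/c⌉`; in particular such a
presentation of `A` is unique. -/
theorem presentation_unique (a b c d : ℤ) (hdet : a * d - b * c = 1)
    (q : List ℤ) (hq : q ≠ [])
    (hq2 : ∀ i, 1 ≤ i → i < q.length → 2 ≤ q.getD i 0)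
    (m ε : ℤ) (hε : ε = 1 ∨ ε = -1)
    (hA : !![a, b; c, d] = ε • Mseq (q ++ [m, 0])) :
    c ≠ 0 ∧ ncf q = (a : ℚ) / (c : ℚ) ∧ m = ⌈(d : ℚ) / (c : ℚ)⌉ ∧
      ∀ (q' : List ℤ) (m' ε' : ℤ), q' ≠ [] →
        (∀ i, 1 ≤ i → i < q'.length → 2 ≤ q'.getD i 0) →
        (ε' = 1 ∨ ε' = -1) →
        !![a, b; c, d] = ε' • Mseq (q' ++ [m', 0]) → q' = q ∧ m' = m := by
  obtain ⟨x, l, rfl⟩ := List.exists_cons_of_ne_nil hq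
  have h := tail_ge x l hq2
  obtain ⟨h1, h2, h3⟩ := pres_main a b c d x l h m ε hε hA
  refine ⟨h1, h2, h3, ?_⟩
  intro q' m' ε' hq' hq2' hε' hA'
  obtain ⟨x', l', rfl⟩ := List.exists_cons_of_ne_nil hq'
  have h' := tail_ge x' l' hq2'
  obtain ⟨-, g2, g3⟩ := pres_main a b c d x' l' h' m' ε' hε' hA'
  obtain ⟨r1, r2⟩ := ncf_inj_s11 l' h' l h x' x (g2.trans h2.symm)
  exact ⟨by rw [r1, r2], g3.trans h3.symm⟩
end

section
/- Let a, b, c, d be positive integers with a > b and let A be the matrix with rows (a, −b) and (c, −d), and suppose A ∈ SL(2,ℤ). If q_1,…,q_k are integers with q_i ≥ 2 for i ∈ {2,…,k} and a/c = [[q_1,…,q_k]], then A = ε·M(q_1,…,q_k) for some ε ∈ {1,−1}. -/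
theorem ncf_cons_aux (q : ℤ) (l : List ℤ) : ncf (q :: l) = (q : ℚ) - 1 / ncf l := by
  cases l with
  | nil => simp [ncf]
  | cons r l => rfl

theorem mseq_cons_aux (q x y z w : ℤ) (l : List ℤ) (h : Mseq l = !![x, -y; z, -w]) :
    Mseq (q :: l) = !![q * x - z, -(q * y - w); x, -y] := by
  have h1 : Mseq (q :: l) = M q * Mseq l := by simp [Mseq]
  rw [h1, h, M, Matrix.mul_fin_two]
  congr 1
  ext i j
  fin_cases i <;> fin_cases j <;> simp <;> ring

theorem tail_aux (l : List ℤ) (hl : ∀ r ∈ l, 2 ≤ r) :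
    ∃ x y z w : ℤ, Mseq l = !![x, -y; z, -w] ∧ z < x ∧ 0 ≤ z ∧ y < x ∧ 0 ≤ y ∧
      z - w ≤ x - y ∧ w ≤ y ∧ x * -w + y * z = 1 ∧ ncf l = (x : ℚ) / (z : ℚ) := by
  induction l with
  | nil =>
    refine ⟨1, 0, 0, -1, ?_, by norm_num, by norm_num, by norm_num, by norm_num, by norm_num,
      by norm_num, by norm_num, by simp [ncf]⟩
    ext i j
    fin_cases i <;> fin_cases j <;> simp [Mseq]
  | cons r l ih =>
    obtain ⟨x, y, z, w, h, h1, h2, h3, h4, h5, h6, h7, h8⟩ :=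
      ih (fun s hs => hl s (List.mem_cons_of_mem _ hs))
    have hr : 2 ≤ r := hl r List.mem_cons_self
    refine ⟨r * x - z, r * y - w, x, y, mseq_cons_aux r x y z w l h, by nlinarith, by linarith,
      by nlinarith, by nlinarith, by nlinarith, by nlinarith, by linarith, ?_⟩
    have hx : (x : ℚ) ≠ 0 := by exact_mod_cast (by linarith : 0 < x).ne'
    rw [ncf_cons_aux, h8, one_div_div]
    push_cast
    field_simp

/-- Let `a, b, c, d` be positive integers with `a > b` and suppose the matrix
`A = !![a, -b; c, -d]` has determinant `1` (i.e. `b·c − a·d = 1`). If `q₁,…,q_k` are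
integers with `qᵢ ≥ 2` for `i ∈ {2,…,k}` and `a/c = [[q₁,…,q_k]]`, then
`A = ε·M(q₁,…,q_k)` for some `ε ∈ {1,−1}`. -/
theorem presentation_of_neg_cols (a b c d : ℤ)
    (ha : 0 < a) (hb : 0 < b) (hc : 0 < c) (hd : 0 < d) (hab : b < a)
    (hdet : b * c - a * d = 1)
    (q : List ℤ) (hq : q ≠ [])
    (hq2 : ∀ i, 1 ≤ i → i < q.length → 2 ≤ q.getD i 0)
    (hncf : ncf q = (a : ℚ) / (c : ℚ)) :
    ∃ ε : ℤ, (ε = 1 ∨ ε = -1) ∧ !![a, -b; c, -d] = ε • Mseq q := by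
  obtain ⟨r, l, rfl⟩ := List.exists_cons_of_ne_nil hq
  have hl : ∀ s ∈ l, 2 ≤ s := by
    intro s hs
    obtain ⟨i, hi, rfl⟩ := List.mem_iff_getElem.mp hs
    have := hq2 (i + 1) (by omega) (by simpa using hi)
    simpa [hi] using this
  obtain ⟨x, y, z, w, h, h1, h2, h3, h4, h5, h6, h7, h8⟩ := tail_aux l hl
  have hx0 : 0 < x := by linarith
  have hx : (x : ℚ) ≠ 0 := by exact_mod_cast hx0.ne'
  have hcq : (c : ℚ) ≠ 0 := by exact_mod_cast hc.ne'
  have hM := mseq_cons_aux r x y z w l h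
  obtain ⟨X, hX⟩ : ∃ X, X = r * x - z := ⟨_, rfl⟩
  obtain ⟨Y, hY⟩ : ∃ Y, Y = r * y - w := ⟨_, rfl⟩
  rw [← hX, ← hY] at hM
  have hdet2 : Y * x - X * y = 1 := by rw [hX, hY]; linarith
  have hcross : X * c = a * x := by
    rw [ncf_cons_aux, h8, one_div_div] at hncf
    have : ((r : ℚ) * x - z) * c = a * x := by
      field_simp at hncf
      linarith
    rw [hX]
    exact_mod_cast this
  have hxc : x = c := by
    apply Int.dvd_antisymm hx0.le hc.le
    · exact ⟨Y * c - a * y, by linear_combination (-c) * hdet2 - y * hcross⟩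
    · exact ⟨b * x - X * d, by linear_combination (-x) * hdet + d * hcross⟩
  subst hxc
  have hXa : X = a := mul_right_cancel₀ hx0.ne' hcross
  subst hXa
  have hdx : d < x := by
    by_contra hcon
    push Not at hcon
    nlinarith
  have hdvd : x ∣ d - y :=
    ⟨Y * d - b * y, by linear_combination (-d) * hdet2 + y * hdet⟩
  have hdy : d = y := by
    have := Int.eq_zero_of_abs_lt_dvd hdvd (by rw [abs_lt]; constructor <;> linarith)
    linarith
  subst hdy
  have hbY : b = Y := mul_right_cancel₀ hx0.ne' (by linarith)
  subst hbY
  exact ⟨1, Or.inl rfl, by rw [hM, one_smul]⟩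
end

section
/- For all integers a, b and every natural number k, the following identities hold: (1) M(a)·(M(2))^k·M(b) = −M(a−1)·M(−(k+1))·M(b−1); (2) M(a)·(M(−2))^k·M(b) = (−1)^k·M(a+1)·M(k+1)·M(b+1); and (3) for every integer k ≥ 1, M(a)·M(−k) = M(a+1)·(M(2))^{k−1}·M(1)·M(0). -/
theorem M_two_pow (n : ℕ) : (M 2) ^ n = !![(n : ℤ) + 1, -n; n, 1 - n] := by
  induction n with
  | zero => ext i j; fin_cases i <;> fin_cases j <;> simp
  | succ n ih =>
    rw [pow_succ, ih]
    ext i j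
    fin_cases i <;> fin_cases j <;> simp [M, Matrix.mul_apply, Fin.sum_univ_two] <;> ring

theorem M_neg_two_pow (n : ℕ) :
    (M (-2)) ^ n = ((-1 : ℤ) ^ n) • !![(n : ℤ) + 1, n; -n, 1 - n] := by
  induction n with
  | zero => ext i j; fin_cases i <;> fin_cases j <;> simp
  | succ n ih =>
    rw [pow_succ, ih]
    ext i j
    fin_cases i <;> fin_cases j <;> simp [M, Matrix.mul_apply, Fin.sum_univ_two] <;> ring

/-- The identities
`M(a)·(M(2))^k·M(b) = −M(a−1)·M(−(k+1))·M(b−1)`,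
`M(a)·(M(−2))^k·M(b) = (−1)^k·M(a+1)·M(k+1)·M(b+1)` (for natural `k`), and
`M(a)·M(−k) = M(a+1)·(M(2))^{k−1}·M(1)·M(0)` for every integer `k ≥ 1`. -/
theorem power_identities (a b : ℤ) (k : ℕ) :
    M a * (M 2) ^ k * M b = -(M (a - 1) * M (-((k : ℤ) + 1)) * M (b - 1)) ∧
    M a * (M (-2)) ^ k * M b = ((-1 : ℤ) ^ k) • (M (a + 1) * M ((k : ℤ) + 1) * M (b + 1)) ∧
    ∀ k' : ℤ, 1 ≤ k' → M a * M (-k') = M (a + 1) * (M 2) ^ (k' - 1).toNat * M 1 * M 0 := by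
  refine ⟨?_, ?_, ?_⟩
  · rw [M_two_pow]
    ext i j
    fin_cases i <;> fin_cases j <;> simp [M, Matrix.mul_apply, Fin.sum_univ_two] <;> ring
  · rw [M_neg_two_pow]
    ext i j
    fin_cases i <;> fin_cases j <;> simp [M, Matrix.mul_apply, Fin.sum_univ_two] <;> ring
  · intro k' hk
    obtain ⟨n, hn⟩ := Int.eq_ofNat_of_zero_le (sub_nonneg.mpr hk)
    obtain rfl : k' = n + 1 := by omega
    rw [hn, Int.toNat_natCast, M_two_pow]
    ext i j
    fin_cases i <;> fin_cases j <;> simp [M, Matrix.mul_apply, Fin.sum_univ_two] <;> ring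
end

section
/- For all integers a, b and every natural number l, there exist ε, ε' ∈ {1,−1} such that M(a)·M(2)·(M(3))^l·M(2)·M(b) = ε·M(a−1)·(M(−3))^{l+1}·M(b−1) and M(a)·M(−2)·(M(−3))^l·M(−2)·M(b) = ε'·M(a+1)·(M(3))^{l+1}·M(b+1). -/
theorem comm_pow {A B P : Matrix (Fin 2) (Fin 2) ℤ} (h : P * A = -(B * P)) (l : ℕ) :
    P * A ^ l = ((-1 : ℤ) ^ l) • (B ^ l * P) := by
  induction l with
  | zero => simp
  | succ n ih =>
    rw [pow_succ, ← mul_assoc, ih, smul_mul_assoc, mul_assoc, h, pow_succ, pow_succ]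
    simp [mul_assoc]

theorem surgery_aux {A B P Q L R L' R' : Matrix (Fin 2) (Fin 2) ℤ} {s : ℤ} {X Y : Matrix (Fin 2) (Fin 2) ℤ}
    (h : P * A = -(B * P)) (hL : L * X = L' * P) (hR : Y * R = Q * R') (hPQ : P * Q = s • B)
    (l : ℕ) : L * X * A ^ l * Y * R = ((-1 : ℤ) ^ l * s) • (L' * B ^ (l + 1) * R') := by
  calc L * X * A ^ l * Y * R = L * X * A ^ l * (Y * R) := by rw [mul_assoc]
    _ = L' * (P * A ^ l) * Q * R' := by rw [hL, hR]; simp only [mul_assoc]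
    _ = ((-1 : ℤ) ^ l) • (L' * B ^ l * (P * Q) * R') := by
      rw [comm_pow h]; simp only [mul_assoc, smul_mul_assoc, mul_smul_comm]
    _ = _ := by
      rw [hPQ, pow_succ]
      simp only [mul_assoc, smul_mul_assoc, mul_smul_comm, smul_smul]

/-- There are signs `ε, ε' ∈ {1,−1}` with
`M(a)·M(2)·(M(3))^l·M(2)·M(b) = ε·M(a−1)·(M(−3))^{l+1}·M(b−1)` and
`M(a)·M(−2)·(M(−3))^l·M(−2)·M(b) = ε'·M(a+1)·(M(3))^{l+1}·M(b+1)`. -/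
theorem surgery_232 (a b : ℤ) (l : ℕ) :
    ∃ ε ε' : ℤ, (ε = 1 ∨ ε = -1) ∧ (ε' = 1 ∨ ε' = -1) ∧
      M a * M 2 * (M 3) ^ l * M 2 * M b
        = ε • (M (a - 1) * (M (-3)) ^ (l + 1) * M (b - 1)) ∧
      M a * M (-2) * (M (-3)) ^ l * M (-2) * M b
        = ε' • (M (a + 1) * (M 3) ^ (l + 1) * M (b + 1)) := by
  refine ⟨(-1) ^ l * (-1), (-1) ^ l * 1, ?_, ?_, ?_, ?_⟩
  · rcases neg_one_pow_eq_or ℤ l with h | h <;> simp [h]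
  · rcases neg_one_pow_eq_or ℤ l with h | h <;> simp [h]
  · apply surgery_aux (P := !![2, -1; -1, 1]) (Q := !![2, 1; 1, 1]) <;>
      ext i j <;> fin_cases i <;> fin_cases j <;> simp [M] <;> ring
  · apply surgery_aux (P := !![-2, -1; -1, -1]) (Q := !![-2, 1; 1, -1]) <;>
      ext i j <;> fin_cases i <;> fin_cases j <;> simp [M] <;> ring
end

section
/- Let (a_1,…,a_n) be a proper sequence of integers with n ≥ 3 and let A ∈ SL(2,ℤ) satisfy A = ε·M(a_1,…,a_n) for some ε ∈ {1,−1}. Then for every B ∈ SL(2,ℤ) and every sequence of integers (d_1,…,d_m) with B·A·B^{−1} = ε'·M(d_1,…,d_m) for some ε' ∈ {1,−1}, one has m ≥ n; i.e. the proper presentation is minimal for the whole conjugacy class of A in PSL(2,ℤ). -/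
/-- A sequence of integers is *proper* if (1) no entry lies in `{−1, 0, 1}`;
(2)-(4) regarded cyclically, it contains no contiguous block of the form
`(2, 3, …, 3, 2)` or `(−2, −3, …, −3, −2)` (with any number, possibly zero, of
middle entries — the case of zero middle entries being two cyclically consecutive
`2`'s resp. `−2`'s); and (5) no cyclic permutation of it equals `(2, 3, …, 3)`
or `(−2, −3, …, −3)`. -/
def Proper (c : List ℤ) : Prop :=
  (∀ x ∈ c, x ≠ -1 ∧ x ≠ 0 ∧ x ≠ 1) ∧
  (∀ (k l : ℕ) (t : List ℤ), c.rotate k ≠ 2 :: (List.replicate l 3 ++ 2 :: t)) ∧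
  (∀ (k l : ℕ) (t : List ℤ), c.rotate k ≠ -2 :: (List.replicate l (-3) ++ -2 :: t)) ∧
  (∀ k l : ℕ, c.rotate k ≠ 2 :: List.replicate l 3) ∧
  (∀ k l : ℕ, c.rotate k ≠ -2 :: List.replicate l (-3))

/-- Farey distance from `∞` to `p/q`, by recursion on the denominator. -/
noncomputable def DN (q : ℕ) (p : ℤ) : ℕ :=
  if q = 0 then 0 else
  if h : 0 < ((Int.gcdA p q) % q).toNat ∧ ((Int.gcdA p q) % q).toNat < q then
    1 + min (DN ((Int.gcdA p q) % q).toNat ((p * ((Int.gcdA p q) % q) - 1) / q))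
      (DN (q - ((Int.gcdA p q) % q).toNat) (p - (p * ((Int.gcdA p q) % q) - 1) / q))
  else 1
termination_by q
decreasing_by
  · exact h.2
  · omega

noncomputable def DV (p q : ℤ) : ℕ :=
  if 0 ≤ q then DN q.toNat p else DN (-q).toNat (-p)

theorem DN_zero (p : ℤ) : DN 0 p = 0 := by
  rw [DN]; simp

theorem DN_one (p : ℤ) : DN 1 p = 1 := by
  rw [DN]; simp

theorem DV_zero (p : ℤ) : DV p 0 = 0 := by simp [DV, DN_zero]
theorem DV_one (p : ℤ) : DV p 1 = 1 := by simp [DV, DN_one]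

theorem DV_neg (p q : ℤ) : DV (-p) (-q) = DV p q := by
  unfold DV
  rcases lt_trichotomy q 0 with h | h | h
  · rw [if_pos (by omega), if_neg (by omega)]
  · subst h; simp [DN_zero]
  · rw [if_neg (by omega), if_pos (by omega)]; simp

theorem DV_rec (p q r s : ℤ) (hs : 0 < s) (hq : s < q) (hd : p * s - q * r = 1) :
    DV p q = 1 + min (DV r s) (DV (p - r) (q - s)) := by
  have hcop : Int.gcd p q = 1 := by
    rw [← Int.isCoprime_iff_gcd_eq_one]
    exact ⟨s, -r, by linarith⟩
  have hbez := Int.gcd_eq_gcd_ab p q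
  rw [hcop] at hbez
  have hdvd : q ∣ (s - Int.gcdA p q) := by
    have h1 : q ∣ p * (s - Int.gcdA p q) :=
      ⟨r + Int.gcdB p q, by push_cast at hbez; linarith⟩
    exact (Int.isCoprime_iff_gcd_eq_one.mpr (by rwa [Int.gcd_comm])).dvd_of_dvd_mul_left h1
  have hmod : (Int.gcdA p q) % q = s := by
    have := (Int.emod_emod_of_dvd s (dvd_refl q))
    have h2 : s % q = (Int.gcdA p q) % q := Int.emod_eq_emod_iff_emod_sub_eq_zero.mpr
      (Int.emod_eq_zero_of_dvd hdvd)
    rw [← h2]; exact Int.emod_eq_of_lt hs.le hq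
  have hr : (p * s - 1) / q = r := by
    have : p * s - 1 = q * r := by linarith
    rw [this]; exact Int.mul_ediv_cancel_left _ (by omega)
  unfold DV
  rw [if_pos (by omega), if_pos (by omega), if_pos (by omega), DN]
  have hqq : ((q.toNat : ℕ) : ℤ) = q := Int.toNat_of_nonneg (by omega)
  rw [if_neg (by omega)]
  simp only [hqq, hmod, hr]
  rw [dif_pos (by omega)]
  have : q.toNat - s.toNat = (q - s).toNat := by omega
  rw [this]

def IsE (a b c d : ℤ) : Prop := a * d - b * c = 1 ∨ a * d - b * c = -1

theorem DV_add (a b c d : ℤ) (hb : 0 < b) (hd : 0 < d) (h : IsE a b c d) :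
    DV (a + c) (b + d) = 1 + min (DV a b) (DV c d) := by
  rcases h with h | h
  · rw [DV_rec (a + c) (b + d) c d hd (by omega) (by linarith)]
    simp [min_comm]
  · rw [DV_rec (a + c) (b + d) a b hb (by omega) (by linarith)]
    simp

theorem DV_lip_aux (n : ℕ) : ∀ (a b c d : ℤ), 0 ≤ b → 0 ≤ d → b + d < n → IsE a b c d →
    DV a b ≤ DV c d + 1 := by
  induction n with
  | zero => intro a b c d hb hd hn; omega
  | succ n ih =>
    intro a b c d hb hd hn h
    rcases hb.eq_or_lt with hb | hb
    · subst hb; simp [DV_zero]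
    rcases hd.eq_or_lt with hd | hd
    · subst hd
      have hb1 : b = 1 := by
        have : b ∣ 1 := by
          rcases h with h | h
          · exact ⟨-c, by linarith⟩
          · exact ⟨c, by linarith⟩
        exact Int.eq_one_of_dvd_one hb.le this
      subst hb1; simp [DV_zero, DV_one]
    rcases lt_trichotomy b d with hbd | hbd | hbd
    · have e : IsE a b (c - a) (d - b) := by
        rcases h with h | h
        · left; linarith
        · right; linarith
      have h1 := DV_add a b (c - a) (d - b) hb (by omega) e
      have h2 := ih a b (c - a) (d - b) hb.le (by omega) (by push_cast at hn; omega) e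
      simp only [add_sub_cancel] at h1
      omega
    · subst hbd
      have hb1 : b = 1 := by
        have : b ∣ 1 := by
          rcases h with h | h
          · exact ⟨a - c, by linarith⟩
          · exact ⟨c - a, by linarith⟩
        exact Int.eq_one_of_dvd_one hb.le this
      subst hb1; simp [DV_one]
    · have e : IsE c d (a - c) (b - d) := by
        rcases h with h | h
        · right; linarith
        · left; linarith
      have h1 := DV_add c d (a - c) (b - d) hd (by omega) e
      simp only [add_sub_cancel] at h1
      omega

theorem DV_lip (a b c d : ℤ) (h : IsE a b c d) : DV a b ≤ DV c d + 1 := by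
  have key : ∀ a b c d : ℤ, 0 ≤ b → 0 ≤ d → IsE a b c d → DV a b ≤ DV c d + 1 :=
    fun a b c d hb hd h => DV_lip_aux (b + d).toNat.succ a b c d hb hd (by push_cast; omega) h
  have hn1 : ∀ a b c d : ℤ, IsE a b c d → IsE (-a) (-b) c d := by
    intro a b c d h
    rcases h with h | h
    · right; linarith
    · left; linarith
  have hn2 : ∀ a b c d : ℤ, IsE a b c d → IsE a b (-c) (-d) := by
    intro a b c d h
    rcases h with h | h
    · right; linarith
    · left; linarith
  rcases le_total 0 b with hb | hb <;> rcases le_total 0 d with hd | hd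
  · exact key _ _ _ _ hb hd h
  · rw [← DV_neg c d]; exact key _ _ _ _ hb (by omega) (hn2 _ _ _ _ h)
  · rw [← DV_neg a b]; exact key _ _ _ _ (by omega) hd (hn1 _ _ _ _ h)
  · rw [← DV_neg a b, ← DV_neg c d]
    exact key _ _ _ _ (by omega) (by omega) (hn1 _ _ _ _ (hn2 _ _ _ _ h))

/-- State of a path: last two vertices `(u1,u2)`, `(v1,v2)`, distance `d`, deficiencies. -/
def St (u1 u2 v1 v2 : ℤ) (d a b : ℕ) : Prop :=
  IsE v1 v2 u1 u2 ∧ |u2| < |v2| ∧ DV v1 v2 = d ∧ DV (v1 - u1) (v2 - u2) + a = d ∧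
    DV (v1 + u1) (v2 + u2) + b = d

theorem St_neg {u1 u2 v1 v2 : ℤ} {d a b : ℕ} (h : St u1 u2 v1 v2 d a b) :
    St (-u1) (-u2) (-v1) (-v2) d a b := by
  obtain ⟨h1, h2, h3, h4, h5⟩ := h
  refine ⟨?_, by simpa using h2, by rw [DV_neg]; exact h3, ?_, ?_⟩
  · rcases h1 with h | h
    · left; linarith
    · right; linarith
  · rw [← h4, ← DV_neg (v1 - u1)]; congr 2 <;> ring
  · rw [← h5, ← DV_neg (v1 + u1)]; congr 2 <;> ring

theorem St_swap {u1 u2 v1 v2 : ℤ} {d a b : ℕ} (h : St u1 u2 v1 v2 d a b) :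
    St (-u1) (-u2) v1 v2 d b a := by
  obtain ⟨h1, h2, h3, h4, h5⟩ := h
  refine ⟨?_, by simpa using h2, h3, ?_, ?_⟩
  · rcases h1 with h | h
    · right; linarith
    · left; linarith
  · simpa using h5
  · simpa [← sub_eq_add_neg] using h4

/-- Deficiency after a step by `c ≥ 2`. -/
def nxt (c : ℤ) (a : ℕ) : ℕ := if c = 2 then 1 else if c = 3 then a else 0

theorem St_step_pos' {u1 u2 v1 v2 : ℤ} {d a b : ℕ} (h : St u1 u2 v1 v2 d a b) (ha : a ≤ 1)
    (hv : 0 < v2) (c : ℤ) (hc : 2 ≤ c) (hca : c = 2 → a = 0) :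
    St v1 v2 (c * v1 - u1) (c * v2 - u2) (d + 1) (nxt c a) 0 := by
  obtain ⟨h1, h2, h3, h4, h5⟩ := h
  rw [abs_of_pos hv] at h2
  obtain ⟨h2a, h2b⟩ := abs_lt.mp h2
  have hE : ∀ k : ℤ, IsE v1 v2 (k * v1 - u1) (k * v2 - u2) := by
    intro k
    rcases h1 with h | h
    · right; linarith
    · left; linarith
  have hrec : ∀ k : ℤ, 1 ≤ k → DV ((k + 1) * v1 - u1) ((k + 1) * v2 - u2) =
      1 + min d (DV (k * v1 - u1) (k * v2 - u2)) := by
    intro k hk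
    have := DV_add v1 v2 (k * v1 - u1) (k * v2 - u2) hv (by nlinarith) (hE k)
    rw [h3] at this
    rw [← this]; congr 1 <;> ring
  have w1 : DV (1 * v1 - u1) (1 * v2 - u2) + a = d := by simpa using h4
  have w2 := hrec 1 le_rfl
  have w3 := hrec 2 (by norm_num)
  norm_num at w1 w2 w3
  have wk : ∀ n : ℕ, DV (((n : ℤ) + 3) * v1 - u1) (((n : ℤ) + 3) * v2 - u2) = d + 1 := by
    intro n
    induction n with
    | zero => norm_num; omega
    | succ n ih =>
      have := hrec ((n : ℤ) + 3) (by omega)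
      rw [ih] at this
      have e : ((n + 1 : ℕ) : ℤ) + 3 = (n : ℤ) + 3 + 1 := by push_cast; ring
      rw [e, this]; omega
  have wk' : ∀ k : ℤ, 3 ≤ k → DV (k * v1 - u1) (k * v2 - u2) = d + 1 := by
    intro k hk
    have := wk (k - 3).toNat
    rwa [Int.toNat_of_nonneg (by omega), sub_add_cancel] at this
  refine ⟨?_, ?_, ?_, ?_, ?_⟩
  · rcases hE c with h | h
    · right; linarith
    · left; linarith
  · rw [abs_of_pos hv, abs_of_pos (by nlinarith)]; nlinarith
  · rcases hc.eq_or_lt with hc2 | hc2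
    · subst hc2; have := hca rfl; omega
    · exact wk' c (by omega)
  · have e1 : c * v1 - u1 - v1 = (c - 1) * v1 - u1 := by ring
    have e2 : c * v2 - u2 - v2 = (c - 1) * v2 - u2 := by ring
    rw [e1, e2]
    unfold nxt
    split_ifs with g1 g2
    · subst g1; have := hca rfl; norm_num; omega
    · subst g2; norm_num; omega
    · rw [wk' (c - 1) (by omega)]
  · have e1 : c * v1 - u1 + v1 = (c + 1) * v1 - u1 := by ring
    have e2 : c * v2 - u2 + v2 = (c + 1) * v2 - u2 := by ring
    rw [e1, e2, wk' (c + 1) (by omega)]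

theorem St_step_pos {u1 u2 v1 v2 : ℤ} {d a b : ℕ} (h : St u1 u2 v1 v2 d a b) (ha : a ≤ 1)
    (c : ℤ) (hc : 2 ≤ c) (hca : c = 2 → a = 0) :
    St v1 v2 (c * v1 - u1) (c * v2 - u2) (d + 1) (nxt c a) 0 := by
  rcases lt_trichotomy v2 0 with hv | hv | hv
  · have := St_neg (St_step_pos' (St_neg h) ha (by omega) c hc hca)
    convert this using 1 <;> ring
  · have := h.2.1
    rw [hv] at this
    have h0 := abs_nonneg u2
    simp at this
    omega
  · exact St_step_pos' h ha hv c hc hca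

theorem St_step_neg {u1 u2 v1 v2 : ℤ} {d a b : ℕ} (h : St u1 u2 v1 v2 d a b) (hb : b ≤ 1)
    (c : ℤ) (hc : c ≤ -2) (hca : c = -2 → b = 0) :
    St v1 v2 (c * v1 - u1) (c * v2 - u2) (d + 1) 0 (nxt (-c) b) := by
  have := St_neg (St_swap (St_step_pos (St_swap h) hb (-c) (by omega) (fun h => hca (by omega))))
  convert this using 1 <;> ring

/-- Partial products. -/
def XP (f : ℕ → ℤ) : ℕ → Matrix (Fin 2) (Fin 2) ℤ
  | 0 => 1
  | i + 1 => XP f i * M (f i)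

def Pend (s : ℤ) (f : ℕ → ℤ) (i : ℕ) : Prop :=
  ∃ j < i, f j = 2 * s ∧ ∀ t, j < t → t < i → f t = 3 * s

theorem Pend_two {s : ℤ} {f : ℕ → ℤ} {i : ℕ} (h : f i = 2 * s) : Pend s f (i + 1) :=
  ⟨i, by omega, h, fun t h1 h2 => by omega⟩

theorem Pend_three {s : ℤ} {f : ℕ → ℤ} {i : ℕ} (h : f i = 3 * s) (hp : Pend s f i) :
    Pend s f (i + 1) := by
  obtain ⟨j, hj, h2, h3⟩ := hp
  refine ⟨j, by omega, h2, fun t h1 h4 => ?_⟩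
  rcases Nat.lt_succ_iff_lt_or_eq.mp h4 with h5 | h5
  · exact h3 t h1 h5
  · rw [h5]; exact h

theorem path_main (f : ℕ → ℤ) (hf : ∀ i, f i ≠ -1 ∧ f i ≠ 0 ∧ f i ≠ 1)
    (hp : ∀ i, Pend 1 f i → f i ≠ 2) (hm : ∀ i, Pend (-1) f i → f i ≠ -2) (i : ℕ) :
    ∃ a b : ℕ, a ≤ 1 ∧ b ≤ 1 ∧ (a = 1 → Pend 1 f (i + 1)) ∧ (b = 1 → Pend (-1) f (i + 1)) ∧
      St (-(XP f (i + 1) 0 1)) (-(XP f (i + 1) 1 1)) (XP f (i + 1) 0 0) (XP f (i + 1) 1 0)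
        (i + 1) a b := by
  induction i with
  | zero =>
    refine ⟨0, 0, by omega, by omega, by omega, by omega, ?_⟩
    simp [XP, M, St, DV_one, IsE]
  | succ i ih =>
    obtain ⟨a, b, ha, hb, pa, pb, hst⟩ := ih
    have e00 : XP f (i + 1 + 1) 0 0 = f (i + 1) * XP f (i + 1) 0 0 - -(XP f (i + 1) 0 1) := by
      rw [XP]; simp [M, Matrix.mul_apply, Fin.sum_univ_two]; ring
    have e10 : XP f (i + 1 + 1) 1 0 = f (i + 1) * XP f (i + 1) 1 0 - -(XP f (i + 1) 1 1) := by
      rw [XP]; simp [M, Matrix.mul_apply, Fin.sum_univ_two]; ring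
    have e01 : -XP f (i + 1 + 1) 0 1 = XP f (i + 1) 0 0 := by
      rw [XP]; simp [M, Matrix.mul_apply, Fin.sum_univ_two]
    have e11 : -XP f (i + 1 + 1) 1 1 = XP f (i + 1) 1 0 := by
      rw [XP]; simp [M, Matrix.mul_apply, Fin.sum_univ_two]
    rw [e00, e10, e01, e11]
    obtain ⟨f1, f2, f3⟩ := hf (i + 1)
    rcases lt_or_ge (f (i + 1)) 0 with hneg | hpos
    · refine ⟨0, nxt (-f (i + 1)) b, by omega, ?_, by omega, ?_, ?_⟩
      · unfold nxt; split_ifs <;> omega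
      · unfold nxt
        split_ifs with g1 g2
        · intro _; exact Pend_two (by omega)
        · intro h; exact Pend_three (by omega) (pb h)
        · intro h; exact absurd h (by norm_num)
      · refine St_step_neg hst hb _ (by omega) (fun h => ?_)
        by_contra h0
        exact hm _ (pb (by omega)) h
    · refine ⟨nxt (f (i + 1)) a, 0, ?_, by omega, ?_, by omega, ?_⟩
      · unfold nxt; split_ifs <;> omega
      · unfold nxt
        split_ifs with g1 g2
        · intro _; exact Pend_two (by omega)
        · intro h; exact Pend_three (by omega) (pa h)
        · intro h; exact absurd h (by norm_num)
      · refine St_step_pos hst ha _ (by omega) (fun h => ?_)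
        by_contra h0
        exact hp _ (pa (by omega)) h

theorem XP_geodesic (f : ℕ → ℤ) (hf : ∀ i, f i ≠ -1 ∧ f i ≠ 0 ∧ f i ≠ 1)
    (hp : ∀ i, Pend 1 f i → f i ≠ 2) (hm : ∀ i, Pend (-1) f i → f i ≠ -2) (i : ℕ) :
    DV (XP f i 0 0) (XP f i 1 0) = i := by
  cases i with
  | zero => simp [XP, DV_zero]
  | succ i =>
    obtain ⟨a, b, _, _, _, _, h⟩ := path_main f hf hp hm i
    exact h.2.2.1

theorem rotate_getElem? (a : List ℤ) (i t : ℕ) (ht : t < a.length) :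
    (a.rotate i)[t]? = some (a.getD ((t + i) % a.length) 0) := by
  have h : (t + i) % a.length < a.length := Nat.mod_lt _ (by omega)
  rw [List.getElem?_rotate ht, List.getD_eq_getElem?_getD]
  simp [h]

theorem pend_false (a : List ℤ) (s : ℤ) (hs : s = 1 ∨ s = -1)
    (h1 : ∀ (k l : ℕ) (t : List ℤ), a.rotate k ≠ 2 * s :: (List.replicate l (3 * s) ++ 2 * s :: t))
    (h2 : ∀ k l : ℕ, a.rotate k ≠ 2 * s :: List.replicate l (3 * s)) (hn : 0 < a.length) (i : ℕ)
    (hP : Pend s (fun i => a.getD (i % a.length) 0) i) : a.getD (i % a.length) 0 ≠ 2 * s := by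
  intro hi
  obtain ⟨j, hj, hj2, hj3⟩ := hP
  simp only at hj2 hj3
  by_cases hlen : i - j < a.length
  · refine h1 j (i - j - 1) ((a.rotate j).drop (i - j + 1)) ?_
    apply List.ext_getElem?
    intro t
    rcases Nat.lt_or_ge t (i - j + 1) with ht | ht
    · rw [rotate_getElem? a j t (by omega)]
      rcases Nat.eq_zero_or_pos t with h0 | h0
      · subst h0; rw [Nat.zero_add, hj2]; rfl
      · obtain ⟨t, rfl⟩ : ∃ t', t = t' + 1 := ⟨t - 1, by omega⟩
        rw [List.getElem?_cons_succ]
        rcases Nat.lt_or_ge t (i - j - 1) with ht2 | ht2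
        · rw [List.getElem?_append_left (by simpa using ht2), List.getElem?_replicate, if_pos ht2,
            hj3 (t + 1 + j) (by omega) (by omega)]
        · have : t = i - j - 1 := by omega
          subst this
          rw [List.getElem?_append_right (by simp)]
          have : i - j - 1 + 1 + j = i := by omega
          rw [this, hi]; simp
    · obtain ⟨t, rfl⟩ : ∃ t', t = t' + (i - j + 1) := ⟨t - (i - j + 1), by omega⟩
      have e : t + (i - j + 1) = (t + (i - j)) + 1 := by omega
      conv_rhs => rw [e]
      rw [List.getElem?_cons_succ, List.getElem?_append_right (by simp; omega)]
      have e2 : t + (i - j) - (List.replicate (i - j - 1) (3 * s)).length = t + 1 := by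
        simp; omega
      rw [e2, List.getElem?_cons_succ, List.getElem?_drop, Nat.add_comm]
  · have hij : i = j + a.length := by
      by_contra hne
      have := hj3 (j + a.length) (by omega) (by omega)
      rw [Nat.add_mod_right, hj2] at this
      omega
    refine h2 j (a.length - 1) ?_
    apply List.ext_getElem?
    intro t
    rcases Nat.lt_or_ge t a.length with ht | ht
    · rw [rotate_getElem? a j t (by omega)]
      rcases Nat.eq_zero_or_pos t with h0 | h0
      · subst h0; rw [Nat.zero_add, hj2]; rfl
      · obtain ⟨t, rfl⟩ : ∃ t', t = t' + 1 := ⟨t - 1, by omega⟩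
        rw [List.getElem?_cons_succ, List.getElem?_replicate, if_pos (by omega),
            hj3 (t + 1 + j) (by omega) (by omega)]
    · rw [List.getElem?_eq_none (by simpa using ht), List.getElem?_eq_none (by simp; omega)]

theorem Mseq_take (a : List ℤ) (i : ℕ) (hi : i < a.length) :
    Mseq (a.take (i + 1)) = Mseq (a.take i) * M a[i] := by
  unfold Mseq
  rw [List.take_succ_eq_append_getElem hi, List.map_append, List.prod_append]
  simp

theorem XP_eq (a : List ℤ) (k : ℕ) : ∀ i, i ≤ a.length →
    XP (fun i => a.getD (i % a.length) 0) (k * a.length + i) =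
      XP (fun i => a.getD (i % a.length) 0) (k * a.length) * Mseq (a.take i) := by
  intro i
  induction i with
  | zero => intro _; simp [Mseq]
  | succ i ih =>
    intro hi
    rw [← Nat.add_assoc, XP, ih (by omega), Mseq_take a i (by omega)]
    have : (k * a.length + i) % a.length = i := by
      rw [Nat.add_comm, Nat.add_mul_mod_self_right, Nat.mod_eq_of_lt (by omega)]
    rw [this, List.getD_eq_getElem _ _ (by omega)]
    rw [mul_assoc]

theorem XP_pow (a : List ℤ) (k : ℕ) :
    XP (fun i => a.getD (i % a.length) 0) (k * a.length) = Mseq a ^ k := by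
  induction k with
  | zero => simp [XP]
  | succ k ih =>
    rw [Nat.succ_mul, XP_eq a k a.length le_rfl, ih, List.take_length, pow_succ]

theorem det_M (c : ℤ) : (M c).det = 1 := by simp [M, Matrix.det_fin_two]

theorem det_Mseq (l : List ℤ) : (Mseq l).det = 1 := by
  induction l with
  | nil => simp [Mseq]
  | cons c l ih =>
    have : Mseq (c :: l) = M c * Mseq l := by simp [Mseq]
    rw [this, Matrix.det_mul, ih, det_M]; rfl

theorem DV_Mseq (l : List ℤ) : ∀ Y : Matrix (Fin 2) (Fin 2) ℤ, Y.det = 1 →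
    DV ((Y * Mseq l) 0 0) ((Y * Mseq l) 1 0) ≤ DV (Y 0 0) (Y 1 0) + l.length := by
  induction l with
  | nil => intro Y _; simp [Mseq]
  | cons c l ih =>
    intro Y hY
    have e : Y * Mseq (c :: l) = (Y * M c) * Mseq l := by simp [Mseq, mul_assoc]
    have h1 := ih (Y * M c) (by rw [Matrix.det_mul, hY, det_M]; rfl)
    have h2 : DV ((Y * M c) 0 0) ((Y * M c) 1 0) ≤ DV (Y 0 0) (Y 1 0) + 1 := by
      apply DV_lip
      right
      rw [Matrix.det_fin_two] at hY
      simp [M, Matrix.mul_apply, Fin.sum_univ_two]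
      linarith
    rw [e, List.length_cons]
    omega

theorem DV_Mseq_pow (l : List ℤ) (k : ℕ) : ∀ Y : Matrix (Fin 2) (Fin 2) ℤ, Y.det = 1 →
    DV ((Y * Mseq l ^ k) 0 0) ((Y * Mseq l ^ k) 1 0) ≤ DV (Y 0 0) (Y 1 0) + k * l.length := by
  induction k with
  | zero => intro Y _; simp
  | succ k ih =>
    intro Y hY
    have h1 := ih (Y * Mseq l) (by rw [Matrix.det_mul, hY, det_Mseq]; rfl)
    have h2 := DV_Mseq l Y hY
    rw [pow_succ', ← mul_assoc, Nat.succ_mul]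
    omega

theorem DV_right (B : Matrix.SpecialLinearGroup (Fin 2) ℤ) :
    ∃ C : ℕ, ∀ Y : Matrix.SpecialLinearGroup (Fin 2) ℤ,
      DV ((Y * B) 0 0) ((Y * B) 1 0) ≤ DV (Y 0 0) (Y 1 0) + C ∧
      DV (Y 0 0) (Y 1 0) ≤ DV ((Y * B) 0 0) ((Y * B) 1 0) + C := by
  have hB : B ∈ Subgroup.closure {ModularGroup.S, ModularGroup.T} := by
    rw [SpecialLinearGroup.SL2Z_generators]; trivial
  induction hB using Subgroup.closure_induction with
  | mem x hx =>
    refine ⟨1, fun Y => ?_⟩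
    have hY := Y.det_coe
    rw [Matrix.det_fin_two] at hY
    rcases hx with rfl | rfl
    · constructor
      · apply DV_lip
        right
        rw [Matrix.SpecialLinearGroup.coe_mul, ModularGroup.coe_S]
        simp [Matrix.mul_apply, Fin.sum_univ_two]
        linarith
      · apply DV_lip
        left
        rw [Matrix.SpecialLinearGroup.coe_mul, ModularGroup.coe_S]
        simp [Matrix.mul_apply, Fin.sum_univ_two]
        linarith
    · rw [Matrix.SpecialLinearGroup.coe_mul, ModularGroup.coe_T]
      simp [Matrix.mul_apply, Fin.sum_univ_two]
  | one => exact ⟨0, fun Y => by simp⟩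
  | mul x y _ _ hx hy =>
    obtain ⟨C1, h1⟩ := hx
    obtain ⟨C2, h2⟩ := hy
    refine ⟨C1 + C2, fun Y => ?_⟩
    have := h1 Y
    have := h2 (Y * x)
    rw [← mul_assoc]
    omega
  | inv x _ hx =>
    obtain ⟨C, h⟩ := hx
    refine ⟨C, fun Y => ?_⟩
    have := h (Y * x⁻¹)
    rw [inv_mul_cancel_right] at this
    exact ⟨this.2, this.1⟩

theorem DV_smul (e : ℤ) (he : e = 1 ∨ e = -1) (X : Matrix (Fin 2) (Fin 2) ℤ) :
    DV ((e • X) 0 0) ((e • X) 1 0) = DV (X 0 0) (X 1 0) := by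
  rcases he with rfl | rfl
  · simp
  · simp [DV_neg]

theorem pm_pow (e : ℤ) (he : e = 1 ∨ e = -1) (k : ℕ) : e ^ k = 1 ∨ e ^ k = -1 := by
  rcases he with rfl | rfl
  · simp
  · exact neg_one_pow_eq_or ℤ k

/-- A proper presentation (of length at least 3) of a matrix `A ∈ SL(2,ℤ)` is minimal
for the whole conjugacy class of `A` in `PSL(2,ℤ)`: if `B·A·B⁻¹ = ε'·M(d₁,…,d_m)` with
`B ∈ SL(2,ℤ)` and `ε' ∈ {1,−1}`, then `m ≥ n`. -/
theorem proper_minimal_in_conjugacy_class (a : List ℤ) (hn : 3 ≤ a.length)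
    (hproper : Proper a) (A : Matrix (Fin 2) (Fin 2) ℤ)
    (ε : ℤ) (hε : ε = 1 ∨ ε = -1) (hA : A = ε • Mseq a) :
    ∀ B : Matrix (Fin 2) (Fin 2) ℤ, B.det = 1 →
      ∀ (d : List ℤ) (ε' : ℤ), (ε' = 1 ∨ ε' = -1) →
        B * A * B⁻¹ = ε' • Mseq d → a.length ≤ d.length := by
  intro B hB d ε' hε' hBA
  obtain ⟨p1, p2, p3, p4, p5⟩ := hproper
  have hgeo : ∀ k : ℕ, DV ((Mseq a ^ k) 0 0) ((Mseq a ^ k) 1 0) = k * a.length := by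
    intro k
    rw [← XP_pow]
    apply XP_geodesic
    · intro i
      have hlt : i % a.length < a.length := Nat.mod_lt _ (by omega)
      simp only [List.getD_eq_getElem a 0 hlt]
      exact p1 _ (List.getElem_mem hlt)
    · intro i h
      exact pend_false a 1 (Or.inl rfl) p2 p4 (by omega) i h
    · intro i h
      exact pend_false a (-1) (Or.inr rfl) p3 p5 (by omega) i h
  have hBu : IsUnit B.det := by rw [hB]; exact isUnit_one
  have hBi : B⁻¹ * B = 1 := Matrix.nonsing_inv_mul B hBu
  have hBi' : B * B⁻¹ = 1 := Matrix.mul_nonsing_inv B hBu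
  have hdetBi : B⁻¹.det = 1 := by
    have := congrArg Matrix.det hBi
    rw [Matrix.det_mul, hB, Matrix.det_one, mul_one] at this
    exact this
  have hpow : ∀ k : ℕ, B * A ^ k * B⁻¹ = ε' ^ k • Mseq d ^ k := by
    intro k
    induction k with
    | zero => simp [hBi']
    | succ k ih =>
      have e : B * A ^ (k + 1) * B⁻¹ = (B * A ^ k * B⁻¹) * (B * A * B⁻¹) := by
        calc B * A ^ (k + 1) * B⁻¹ = B * A ^ k * 1 * A * B⁻¹ := by
              rw [pow_succ]; simp only [mul_assoc, one_mul, mul_one]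
          _ = _ := by rw [← hBi]; simp only [mul_assoc]
      rw [e, ih, hBA, smul_mul_smul_comm, ← pow_succ, ← pow_succ]
  have hpow2 : ∀ k : ℕ, ε ^ k • Mseq a ^ k = ε' ^ k • (B⁻¹ * Mseq d ^ k * B) := by
    intro k
    have h1 : A ^ k = B⁻¹ * (B * A ^ k * B⁻¹) * B := by
      calc A ^ k = (B⁻¹ * B) * A ^ k * (B⁻¹ * B) := by rw [hBi]; simp
        _ = _ := by simp only [mul_assoc]
    rw [hpow k] at h1
    rw [← smul_pow, ← hA, h1, Matrix.mul_smul, Matrix.smul_mul]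
  obtain ⟨C, hC⟩ := DV_right ⟨B, hB⟩
  have hk : ∀ k : ℕ, k * a.length ≤ k * d.length + (DV (B⁻¹ 0 0) (B⁻¹ 1 0) + C) := by
    intro k
    have h1 := DV_smul _ (pm_pow ε hε k) (Mseq a ^ k)
    rw [hpow2, DV_smul _ (pm_pow ε' hε' k), hgeo] at h1
    have h2 := DV_Mseq_pow d k B⁻¹ hdetBi
    have hdet : (B⁻¹ * Mseq d ^ k).det = 1 := by
      rw [Matrix.det_mul, Matrix.det_pow, det_Mseq, hdetBi]; simp
    have h3 : DV ((B⁻¹ * Mseq d ^ k * B) 0 0) ((B⁻¹ * Mseq d ^ k * B) 1 0) ≤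
      DV ((B⁻¹ * Mseq d ^ k) 0 0) ((B⁻¹ * Mseq d ^ k) 1 0) + C :=
        (hC ⟨B⁻¹ * Mseq d ^ k, hdet⟩).1
    omega
  by_contra hlt
  push Not at hlt
  have := hk (DV (B⁻¹ 0 0) (B⁻¹ 1 0) + C + 1)
  nlinarith
end
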